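/- arXiv:alg-geom/9603011 — 2 statements merged into one kernel-verified Lean document; each statement's English description precedes it below -/
import Mathlib

section
/- Let b ≥ 1 be an integer and let p, q ∈ S be homogeneous polynomials of degrees b−1 and b respectively, with no common zeros along Y. Then there is a (necessarily unique) S-module homomorphism u from the ideal (x, y²) to S/(x,y) satisfying u(x) = p + (x,y) and u(y²) = q + (x,y), and the kernel of u is exactly the ideal (x², xy, y³, xq − y²p), regarded as an S-submodule of (x, y²). (This kernel is the saturated homogeneous ideal of a multiplicity-three structure W on the line Y.) -/
open MvPolynomial

/-- The pair `(p, q)` has no common zeros along the line `Y = {x = y = 0}`. -/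
def NoCommonZerosAlongY {k : Type*} [Field k] (p q : MvPolynomial (Fin 4) k) : Prop :=
  ∀ c d : k, (c, d) ≠ (0, 0) → eval ![0, 0, c, d] p ≠ 0 ∨ eval ![0, 0, c, d] q ≠ 0

/-!
A linear map out of `(x, y²)` is determined by its values on the generators, and these values are
subject only to the relations between `x` and `y²`; as `x` and `y²` are coprime, the only relation
is the Koszul one, which every module killed by `x` and `y` satisfies.

The image `r p + s q` of `r x + s y²` vanishes in `S/(x, y)` exactly when `(r, s)` is, modulo
`(x, y)`, a relation between `p` and `q`. By the Nullstellensatz the restrictions of `p` and `q` to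
the line are coprime in `k[z, w]`, so that again only the Koszul relations `(t q, -t p)` occur, and
the kernel is `(x, y) (x, y²) + (x q - y² p)`.
-/

section Koszul

variable {R : Type*} [CommRing R]

/-- The first Koszul homology of the pair `(a, b)` vanishes: the module of syzygies of `a` and `b`
is generated by the Koszul syzygy `(b, -a)`. -/
def OnlyKoszulSyzygies (a b : R) : Prop :=
  ∀ ⦃r s : R⦄, r * a + s * b = 0 → ∃ t, r = t * b ∧ s = -(t * a)

theorem onlyKoszulSyzygies_of_isRelPrime [IsDomain R] [DecompositionMonoid R] {a b : R}
    (hab : IsRelPrime a b) : OnlyKoszulSyzygies a b := by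
  intro r s hrs
  obtain rfl | hb := eq_or_ne b 0
  · obtain ⟨v, rfl⟩ := isRelPrime_zero_right.1 hab
    refine ⟨-(s * ↑v⁻¹), ?_, by simp⟩
    simpa using hrs
  · have b_dvd : b ∣ r * a := ⟨-s, by linear_combination hrs⟩
    obtain ⟨t, rfl⟩ := hab.symm.dvd_of_dvd_mul_right b_dvd
    refine ⟨t, mul_comm _ _, mul_left_cancel₀ hb ?_⟩
    linear_combination hrs

theorem linearMap_span_pair_apply {M : Type*} [AddCommMonoid M] [Module R M] {a b : R}
    (u : (Ideal.span {a, b} : Ideal R) →ₗ[R] M) (r s : R) (h : r * a + s * b ∈ Ideal.span {a, b}) :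
    u ⟨r * a + s * b, h⟩ =
      r • u ⟨a, Ideal.subset_span (by simp)⟩ + s • u ⟨b, Ideal.subset_span (by simp)⟩ := by
  rw [← map_smul, ← map_smul, ← map_add]
  rfl

theorem mem_mul_span_pair {I : Ideal R} {a b f : R} :
    f ∈ I * Ideal.span {a, b} ↔ ∃ i ∈ I, ∃ j ∈ I, i * a + j * b = f := by
  rw [Ideal.span_insert, Ideal.mul_sup, Submodule.mem_sup]
  simp [Ideal.mem_mul_span_singleton]

theorem span_pair_mul_span_pair_sq (x y : R) :
    Ideal.span {x, y} * Ideal.span {x, y ^ 2} = Ideal.span {x ^ 2, x * y, y ^ 3} := by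
  have redundant : x * y ^ 2 ∈ Ideal.span {x ^ 2, x * y, y ^ 3} :=
    Ideal.mem_span_insert.2 ⟨0, x * y ^ 2, Ideal.mem_span_pair.2 ⟨y, 0, by ring⟩, by ring⟩
  rw [Ideal.span_pair_mul_span_pair, ← sq, mul_comm y x, ← pow_succ', Set.insert_comm]
  exact Submodule.span_insert_eq_span redundant

namespace OnlyKoszulSyzygies

theorem of_ringEquiv {A : Type*} [CommRing A] (e : R ≃+* A) {a b : R}
    (h : OnlyKoszulSyzygies (e a) (e b)) : OnlyKoszulSyzygies a b := by
  intro r s hrs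
  obtain ⟨t, hr, hs⟩ := h (r := e r) (s := e s) (by simpa using congrArg e hrs)
  exact ⟨e.symm t, e.injective (by simpa using hr), e.injective (by simpa using hs)⟩

theorem exists_linearMap_span_pair {M : Type*} [AddCommGroup M] [Module R M] {a b : R}
    (hab : OnlyKoszulSyzygies a b) {m n : M} (hmn : b • m = a • n) :
    ∃ u : (Ideal.span {a, b} : Ideal R) →ₗ[R] M,
      u ⟨a, Ideal.subset_span (by simp)⟩ = m ∧ u ⟨b, Ideal.subset_span (by simp)⟩ = n := by
  let gen : R × R →ₗ[R] (Ideal.span {a, b} : Ideal R) :=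
    (LinearMap.toSpanSingleton R _ ⟨a, Ideal.subset_span (by simp)⟩).coprod
      (LinearMap.toSpanSingleton R _ ⟨b, Ideal.subset_span (by simp)⟩)
  let val : R × R →ₗ[R] M :=
    (LinearMap.toSpanSingleton R M m).coprod (LinearMap.toSpanSingleton R M n)
  have gen_surjective : Function.Surjective gen := by
    rintro ⟨f, hf⟩
    obtain ⟨r, s, rfl⟩ := Ideal.mem_span_pair.1 hf
    exact ⟨(r, s), by simp [gen]⟩
  have ker_le : LinearMap.ker gen ≤ LinearMap.ker val := by
    rintro ⟨r, s⟩ hrs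
    obtain ⟨t, rfl, rfl⟩ := hab (r := r) (s := s) (by simpa [gen] using congrArg Subtype.val hrs)
    simp [val, mul_smul, hmn]
  let u := (LinearMap.ker gen).liftQ val ker_le ∘ₗ
    (gen.quotKerEquivOfSurjective gen_surjective).symm.toLinearMap
  have u_gen (v : R × R) : u (gen v) = val v := by simp [u]
  exact ⟨u, by simpa [gen, val] using u_gen (1, 0), by simpa [gen, val] using u_gen (0, 1)⟩

theorem ker_eq_comap_mul_span_pair_sup {I : Ideal R} {a b p q : R}
    (hpq : OnlyKoszulSyzygies (Ideal.Quotient.mk I p) (Ideal.Quotient.mk I q))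
    {u : (Ideal.span {a, b} : Ideal R) →ₗ[R] R ⧸ I}
    (ha : u ⟨a, Ideal.subset_span (by simp)⟩ = Ideal.Quotient.mk I p)
    (hb : u ⟨b, Ideal.subset_span (by simp)⟩ = Ideal.Quotient.mk I q) :
    LinearMap.ker u = Submodule.comap (Submodule.subtype (Ideal.span {a, b}))
      (I * Ideal.span {a, b} ⊔ Ideal.span {a * q - b * p}) := by
  have u_apply (r s : R) (h : r * a + s * b ∈ Ideal.span {a, b}) :
      u ⟨r * a + s * b, h⟩ = Ideal.Quotient.mk I (r * p + s * q) := by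
    rw [linearMap_span_pair_apply, ha, hb]
    rfl
  apply le_antisymm
  · rintro ⟨f, hf⟩ huf
    obtain ⟨r, s, rfl⟩ := Ideal.mem_span_pair.1 hf
    rw [LinearMap.mem_ker, u_apply, map_add, map_mul, map_mul] at huf
    obtain ⟨t', hr, hs⟩ := hpq huf
    obtain ⟨t, rfl⟩ := Ideal.Quotient.mk_surjective t'
    have hi : r - t * q ∈ I := Ideal.Quotient.eq.1 (by rw [hr, map_mul])
    have hj : s - -(t * p) ∈ I := Ideal.Quotient.eq.1 (by rw [hs, map_neg, map_mul])
    exact Submodule.mem_sup.2 ⟨_, mem_mul_span_pair.2 ⟨_, hi, _, hj, rfl⟩,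
      _, Ideal.mem_span_singleton'.2 ⟨t, rfl⟩, by rw [Submodule.subtype_apply]; ring⟩
  · rintro ⟨f, hf⟩ hmem
    obtain ⟨_, hij, _, ht, rfl : _ + _ = f⟩ := Submodule.mem_sup.1 hmem
    obtain ⟨i, hi, j, hj, rfl⟩ := mem_mul_span_pair.1 hij
    obtain ⟨t, rfl⟩ := Ideal.mem_span_singleton'.1 ht
    have regroup : i * a + j * b + t * (a * q - b * p) = (i + t * q) * a + (j - t * p) * b := by
      ring
    simp only [regroup, LinearMap.mem_ker, u_apply, Ideal.Quotient.eq_zero_iff_mem]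
    convert I.add_mem (I.mul_mem_right p hi) (I.mul_mem_right q hj) using 1
    ring

theorem exists_linearMap_span_pair_sq_ker_eq {x y p q : R} (hxy : OnlyKoszulSyzygies x (y ^ 2))
    (hpq : OnlyKoszulSyzygies (Ideal.Quotient.mk (Ideal.span {x, y}) p)
      (Ideal.Quotient.mk (Ideal.span {x, y}) q)) :
    ∃ u : (Ideal.span {x, y ^ 2} : Ideal R) →ₗ[R] R ⧸ Ideal.span {x, y},
      (u ⟨x, Ideal.subset_span (by simp)⟩ = Ideal.Quotient.mk _ p ∧
        u ⟨y ^ 2, Ideal.subset_span (by simp)⟩ = Ideal.Quotient.mk _ q) ∧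
      (∀ u' : (Ideal.span {x, y ^ 2} : Ideal R) →ₗ[R] R ⧸ Ideal.span {x, y},
        (u' ⟨x, Ideal.subset_span (by simp)⟩ = Ideal.Quotient.mk _ p ∧
          u' ⟨y ^ 2, Ideal.subset_span (by simp)⟩ = Ideal.Quotient.mk _ q) → u' = u) ∧
      LinearMap.ker u = Submodule.comap (Submodule.subtype (Ideal.span {x, y ^ 2}))
        (Ideal.span {x ^ 2, x * y, y ^ 3, x * q - y ^ 2 * p}) := by
  have koszul_relation : y ^ 2 • Ideal.Quotient.mk (Ideal.span {x, y}) p =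
      x • Ideal.Quotient.mk (Ideal.span {x, y}) q := by
    refine Ideal.Quotient.eq.2 (Ideal.mem_span_pair.2 ⟨-q, y * p, ?_⟩)
    simp only [smul_eq_mul]
    ring
  obtain ⟨u, hux, huy⟩ := hxy.exists_linearMap_span_pair koszul_relation
  refine ⟨u, ⟨hux, huy⟩, fun u' hu' ↦ ?_, ?_⟩
  · ext ⟨f, hf⟩
    obtain ⟨r, s, rfl⟩ := Ideal.mem_span_pair.1 hf
    rw [linearMap_span_pair_apply, linearMap_span_pair_apply, hu'.1, hu'.2, hux, huy]
  · rw [hpq.ker_eq_comap_mul_span_pair_sup hux huy, span_pair_mul_span_pair_sq,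
      ← Submodule.span_union]
    congr 2
    grind

end OnlyKoszulSyzygies

end Koszul

section Restriction

variable {σ τ : Type*}

theorem isRelPrime_X_X {R : Type*} [CommRing R] [IsDomain R] {i j : σ} (hij : i ≠ j) :
    IsRelPrime (X i : MvPolynomial σ R) (X j) := by
  rw [(X_prime (R := R) (i := i)).irreducible.isRelPrime_iff_not_dvd, X_dvd_X]
  simpa using hij

theorem ker_killCompl {R : Type*} [CommSemiring R] {f : σ → τ} (hf : f.Injective) :
    RingHom.ker (killCompl hf : MvPolynomial τ R →ₐ[R] MvPolynomial σ R) =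
      Ideal.span (X '' (Set.range f)ᶜ) := by
  apply le_antisymm
  · intro p hp
    rw [mem_ideal_span_X_image]
    by_contra! ⟨m, hm, hmf⟩
    have support_subset : (m.support : Set τ) ⊆ Set.range f := fun i hi ↦
      by_contra fun hif ↦ Finsupp.mem_support_iff.1 hi (hmf i hif)
    apply mem_support_iff.1 hm
    rw [← m.mapDomain_comapDomain f hf support_subset, ← coeff_killCompl hf, hp, coeff_zero]
  · rw [Ideal.span_le]
    rintro _ ⟨i, hi, rfl⟩
    exact (aeval_X _ i).trans (dif_neg hi)

theorem aeval_killCompl {R A : Type*} [CommSemiring R] [CommSemiring A] [Algebra R A] {f : σ → τ}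
    (hf : f.Injective) (v : σ → A) (p : MvPolynomial τ R) :
    aeval v (killCompl hf p) = aeval (Function.extend f v 0) p := by
  suffices h : (aeval v).comp (killCompl hf) = aeval (R := R) (Function.extend f v 0) from
    DFunLike.congr_fun h p
  ext i
  by_cases hi : i ∈ Set.range f
  · obtain ⟨j, rfl⟩ := hi
    simp [killCompl, hf.extend_apply]
  · simp [killCompl, hi, Function.extend_apply' _ _ _ hi]

variable {k : Type*} (K : Type*) [Field k] [Field K] [Algebra k K] [IsAlgClosed K]

theorem isRelPrime_of_forall_aeval_eq_zero [Finite σ] [Nontrivial σ] {f g : MvPolynomial σ k}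
    (hfg : ∀ v : σ → K, aeval v f = 0 → aeval v g = 0 → v = 0) : IsRelPrime f g := by
  intro d hdf hdg
  have X_mem_radical (i : σ) : X i ∈ (Ideal.span {f, g}).radical := by
    rw [← vanishingIdeal_zeroLocus_eq_radical (K := K), zeroLocus_span]
    intro v hv
    simp [hfg v (hv f (by simp)) (hv g (by simp))]
  have dvd_X_pow (i : σ) : ∃ n, d ∣ X i ^ n := by
    obtain ⟨n, hn⟩ := X_mem_radical i
    obtain ⟨a, b, hab⟩ := Ideal.mem_span_pair.1 hn
    exact ⟨n, hab ▸ dvd_add (hdf.mul_left a) (hdg.mul_left b)⟩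
  obtain ⟨i, j, hij⟩ := exists_pair_ne σ
  obtain ⟨m, hm⟩ := dvd_X_pow i
  obtain ⟨n, hn⟩ := dvd_X_pow j
  exact (isRelPrime_X_X hij).pow hm hn

theorem onlyKoszulSyzygies_mk_span_X_compl_range [Finite σ] [Nontrivial σ] {f : σ → τ}
    (hf : f.Injective) {p q : MvPolynomial τ k}
    (hpq : ∀ v : σ → K, aeval (Function.extend f v 0) p = 0 →
      aeval (Function.extend f v 0) q = 0 → v = 0) :
    OnlyKoszulSyzygies (Ideal.Quotient.mk (Ideal.span (X '' (Set.range f)ᶜ)) p)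
      (Ideal.Quotient.mk (Ideal.span (X '' (Set.range f)ᶜ)) q) := by
  simp only [← aeval_killCompl hf] at hpq
  have restrict_surjective : Function.Surjective (killCompl (R := k) hf) :=
    fun g ↦ ⟨rename f g, killCompl_rename_app hf g⟩
  rw [← ker_killCompl hf]
  exact .of_ringEquiv (RingHom.quotientKerEquivOfSurjective restrict_surjective)
    (onlyKoszulSyzygies_of_isRelPrime (isRelPrime_of_forall_aeval_eq_zero K hpq))

theorem onlyKoszulSyzygies_mk_span_X_zero_X_one {p q : MvPolynomial (Fin 4) k}
    (hpq : ∀ c d : K, (c, d) ≠ (0, 0) →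
      aeval ![0, 0, c, d] p ≠ 0 ∨ aeval ![0, 0, c, d] q ≠ 0) :
    OnlyKoszulSyzygies (Ideal.Quotient.mk (Ideal.span {X 0, X 1}) p)
      (Ideal.Quotient.mk (Ideal.span {X 0, X 1}) q) := by
  let line : Fin 2 → Fin 4 := ![2, 3]
  have line_injective : line.Injective := by decide
  have line_compl : (Set.range line)ᶜ = {0, 1} := by
    ext i
    fin_cases i <;> simp [line]
  have extend_line (v : Fin 2 → K) : Function.extend line v 0 = ![0, 0, v 0, v 1] := by
    ext i
    fin_cases i
    · exact Function.extend_apply' _ _ _ (by decide)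
    · exact Function.extend_apply' _ _ _ (by decide)
    · exact line_injective.extend_apply v 0 0
    · exact line_injective.extend_apply v 0 1
  rw [← Set.image_pair, ← line_compl]
  refine onlyKoszulSyzygies_mk_span_X_compl_range K line_injective fun v hp hq ↦ ?_
  rw [extend_line] at hp hq
  have v_eq : (v 0, v 1) = (0, 0) := by
    by_contra hv
    exact (hpq _ _ hv).elim (· hp) (· hq)
  ext i
  fin_cases i
  exacts [congrArg Prod.fst v_eq, congrArg Prod.snd v_eq]

theorem stmt_3_general (p q : MvPolynomial (Fin 4) k)
    (hpq : ∀ c d : K, (c, d) ≠ (0, 0) →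
      aeval ![0, 0, c, d] p ≠ 0 ∨ aeval ![0, 0, c, d] q ≠ 0) :
    ∃ u : (Ideal.span {X 0, X 1 ^ 2} : Ideal (MvPolynomial (Fin 4) k)) →ₗ[MvPolynomial (Fin 4) k]
        (MvPolynomial (Fin 4) k ⧸ (Ideal.span {X 0, X 1} : Ideal (MvPolynomial (Fin 4) k))),
      (u ⟨X 0, Ideal.subset_span (by simp)⟩ = Ideal.Quotient.mk _ p ∧
        u ⟨X 1 ^ 2, Ideal.subset_span (by simp)⟩ = Ideal.Quotient.mk _ q) ∧
      (∀ u' : (Ideal.span {X 0, X 1 ^ 2} : Ideal (MvPolynomial (Fin 4) k))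
          →ₗ[MvPolynomial (Fin 4) k]
          (MvPolynomial (Fin 4) k ⧸ (Ideal.span {X 0, X 1} : Ideal (MvPolynomial (Fin 4) k))),
        (u' ⟨X 0, Ideal.subset_span (by simp)⟩ = Ideal.Quotient.mk _ p ∧
          u' ⟨X 1 ^ 2, Ideal.subset_span (by simp)⟩ = Ideal.Quotient.mk _ q) → u' = u) ∧
      LinearMap.ker u = Submodule.comap
        (Submodule.subtype (Ideal.span {X 0, X 1 ^ 2} : Ideal (MvPolynomial (Fin 4) k)))
        (Ideal.span {X 0 ^ 2, X 0 * X 1, X 1 ^ 3, X 0 * q - X 1 ^ 2 * p}) :=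
  OnlyKoszulSyzygies.exists_linearMap_span_pair_sq_ker_eq
    (onlyKoszulSyzygies_of_isRelPrime (isRelPrime_X_X (by decide)).pow_right)
    (onlyKoszulSyzygies_mk_span_X_zero_X_one K hpq)

end Restriction

/-- for `b ≥ 1` and `p, q` homogeneous of degrees `b−1, b` with no common
zeros along `Y`, there is a unique `S`-module homomorphism `u : (x, y²) → S/(x,y)` with
`u(x) = p̄`, `u(y²) = q̄`, and its kernel is the ideal `(x², xy, y³, xq − y²p)`. -/
theorem stmt_3 {k : Type*} [Field k] [IsAlgClosed k] (b : ℕ) (hb : 1 ≤ b)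
    (p q : MvPolynomial (Fin 4) k)
    (hp : p.IsHomogeneous (b - 1)) (hq : q.IsHomogeneous b)
    (hpq : NoCommonZerosAlongY p q) :
    ∃ u : (Ideal.span {X 0, X 1 ^ 2} : Ideal (MvPolynomial (Fin 4) k)) →ₗ[MvPolynomial (Fin 4) k]
        (MvPolynomial (Fin 4) k ⧸ (Ideal.span {X 0, X 1} : Ideal (MvPolynomial (Fin 4) k))),
      (u ⟨X 0, Ideal.subset_span (by simp)⟩ = Ideal.Quotient.mk _ p ∧
        u ⟨X 1 ^ 2, Ideal.subset_span (by simp)⟩ = Ideal.Quotient.mk _ q) ∧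
      (∀ u' : (Ideal.span {X 0, X 1 ^ 2} : Ideal (MvPolynomial (Fin 4) k)) →ₗ[MvPolynomial (Fin 4) k]
          (MvPolynomial (Fin 4) k ⧸ (Ideal.span {X 0, X 1} : Ideal (MvPolynomial (Fin 4) k))),
        (u' ⟨X 0, Ideal.subset_span (by simp)⟩ = Ideal.Quotient.mk _ p ∧
          u' ⟨X 1 ^ 2, Ideal.subset_span (by simp)⟩ = Ideal.Quotient.mk _ q) → u' = u) ∧
      LinearMap.ker u = Submodule.comap
        (Submodule.subtype (Ideal.span {X 0, X 1 ^ 2} : Ideal (MvPolynomial (Fin 4) k)))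
        (Ideal.span {X 0 ^ 2, X 0 * X 1, X 1 ^ 3, X 0 * q - X 1 ^ 2 * p}) :=
  stmt_3_general k p q fun c d hcd ↦ by simpa [aeval_eq_eval] using hpq c d hcd
end

section
/- Let b ≥ 1 be an integer and let p, q ∈ S be homogeneous polynomials of degrees b−1 and b respectively, with no common zeros along Y. Then for all sufficiently large n, the k-dimension of the degree-n graded component of S/(x², xy, y³, xq − y²p) equals 3n + b. (Equivalently, the triple line W with saturated ideal I_W = (x², xy, y³, xq − y²p) is a curve of degree 3 and arithmetic genus 1−b.) -/
open MvPolynomial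

/-- The `k`-dimension of the degree-`n` graded piece of `S ⧸ I`, realized as the image of
the space of degree-`n` homogeneous polynomials in the quotient. -/
noncomputable def gradedPieceDim (k : Type*) [Field k] (I : Ideal (MvPolynomial (Fin 4) k))
    (n : ℕ) : ℕ :=
  Module.finrank k
    ((homogeneousSubmodule (Fin 4) k n).map (Ideal.Quotient.mkₐ k I).toLinearMap)

/-!
For a homogeneous ideal `I` and a form `G` of degree `d`, multiplication by `G` identifies
`S ⧸ (I : G)`, shifted by `d`, with the kernel of `S ⧸ I → S ⧸ (I + (G))`, so the Hilbert functions
satisfy `h_I(n + d) = h_{I + (G)}(n + d) + h_{I : G}(n)`. All the colon ideals needed here equal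
`I_Y = (x, y)`. Hence `J = (x², xy, y³)` has Hilbert function
`h_J(n + 2) = h_Y(n + 2) + 2 h_Y(n + 1) + h_Y(n)`, where `h_Y(n) = n + 1`. As `p` or `q` does not
vanish identically on `Y`, also `J : (xq - y²p) = I_Y`, so adding this form of degree `b + 1` to `J`
subtracts `h_Y(n - b - 1)`, which leaves `4n - (n - b) = 3n + b`.
-/

open Module Ideal

section ColonIdeals

variable {R : Type*} [CommRing R] {x y : R}

theorem mem_span_pair_of_pow_mul_mem (hy : Prime y) (hyx : ¬ y ∣ x) {m : ℕ} {g : R}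
    (h : x ^ m * g ∈ span {x ^ (m + 1), y}) : g ∈ span {x, y} := by
  obtain ⟨a, c, hac⟩ := mem_span_pair.mp h
  have hdvd : y ∣ x ^ m * (g - a * x) := ⟨c, by linear_combination -hac⟩
  obtain hx | ⟨e, he⟩ := hy.dvd_or_dvd hdvd
  · exact absurd (hy.dvd_of_dvd_pow hx) hyx
  · exact mem_span_pair.mpr ⟨a, e, by linear_combination -he⟩

theorem colon_singleton_eq_span_pair (hP : (span {x, y}).IsPrime) (hy : Prime y) (hyx : ¬ y ∣ x)
    {I : Ideal R} {G h : R} {m : ℕ} (hxG : x * G ∈ I) (hyG : y * G ∈ I)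
    (hI : I ≤ span {x ^ (m + 1), y}) (hG : y ∣ G - x ^ m * h) (hh : h ∉ span {x, y}) :
    I.colon {G} = span {x, y} := by
  ext g
  rw [Submodule.mem_colon_singleton, smul_eq_mul]
  constructor
  · intro hg
    have hy_mem : g * (G - x ^ m * h) ∈ span {x ^ (m + 1), y} :=
      mul_mem_left _ _ (mem_of_dvd _ hG (subset_span (by simp)))
    have hgh : x ^ m * (g * h) ∈ span {x ^ (m + 1), y} := by
      convert sub_mem (hI hg) hy_mem using 1; ring
    exact (hP.mem_or_mem (mem_span_pair_of_pow_mul_mem hy hyx hgh)).resolve_right hh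
  · intro hg
    obtain ⟨a, c, rfl⟩ := mem_span_pair.mp hg
    convert add_mem (I.mul_mem_left a hxG) (I.mul_mem_left c hyG) using 1; ring

end ColonIdeals

section GradedIdeals

variable {R A : Type*} [CommRing R] [CommRing A] [Algebra R A] {𝒜 : ℕ → Submodule R A}
  [GradedAlgebra 𝒜] {I : Ideal A} {d : ℕ} {G : A}

theorem exists_sub_mul_mem_of_mem_sup_span_singleton (hI : I.IsHomogeneous 𝒜) (hG : G ∈ 𝒜 d)
    {n : ℕ} {f : A} (hf : f ∈ 𝒜 (n + d)) (hfI : f ∈ I ⊔ span {G}) :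
    ∃ g ∈ 𝒜 n, f - g * G ∈ I := by
  obtain ⟨i, hi, c, hc, rfl⟩ := Submodule.mem_sup.mp hfI
  obtain ⟨a, rfl⟩ := mem_span_singleton'.mp hc
  refine ⟨DirectSum.decompose 𝒜 a n, SetLike.coe_mem _, ?_⟩
  have hdecomp : i + a * G - DirectSum.decompose 𝒜 a n * G = DirectSum.decompose 𝒜 i (n + d) := by
    rw [← DirectSum.coe_decompose_mul_add_of_right_mem 𝒜 hG, sub_eq_iff_eq_add]
    conv_lhs => rw [← DirectSum.decompose_of_mem_same 𝒜 hf]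
    simp
  rw [hdecomp]
  exact hI (n + d) hi

theorem map_mk_inf_ker_factor (hI : I.IsHomogeneous 𝒜) (hG : G ∈ 𝒜 d) (n : ℕ) :
    (𝒜 (n + d)).map (Quotient.mkₐ R I).toLinearMap ⊓
        LinearMap.ker (Quotient.factorₐ R (le_sup_left : I ≤ I ⊔ span {G})).toLinearMap =
      (𝒜 n).map ((Quotient.mkₐ R I).toLinearMap ∘ₗ LinearMap.mulRight R G) := by
  ext v
  constructor
  · rintro ⟨⟨f, hf, rfl⟩, hker⟩
    have hfI : f ∈ I ⊔ span {G} := Quotient.eq_zero_iff_mem.mp hker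
    obtain ⟨g, hg, hfg⟩ := exists_sub_mul_mem_of_mem_sup_span_singleton hI hG hf hfI
    exact ⟨g, hg, (Ideal.Quotient.eq.mpr hfg).symm⟩
  · rintro ⟨g, hg, rfl⟩
    have hgG : g * G ∈ I ⊔ span {G} :=
      mem_sup_right (mul_mem_left _ g (mem_span_singleton_self G))
    exact ⟨⟨g * G, SetLike.mul_mem_graded hg hG, rfl⟩, Quotient.eq_zero_iff_mem.mpr hgG⟩

end GradedIdeals

section HilbertFunction

variable {k : Type*} [Field k]

theorem finrank_map_add_finrank_inf_ker {V W : Type*} [AddCommGroup V] [Module k V]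
    [AddCommGroup W] [Module k W] (f : V →ₗ[k] W) (H : Submodule k V) [FiniteDimensional k H] :
    finrank k (H.map f) + finrank k ↥(H ⊓ LinearMap.ker f) = finrank k H := by
  rw [← (f.domRestrict H).finrank_range_add_finrank_ker, LinearMap.range_domRestrict,
    LinearMap.ker_domRestrict, ← Submodule.map_comap_subtype, Submodule.finrank_map_subtype_eq]

variable {A : Type*} [CommRing A] [Algebra k A]

/-- The Hilbert function `n ↦ dim_k (A ⧸ I)_n` of the quotient of an algebra `A`, graded by `𝒜`, by
an ideal `I`; the graded piece is encoded as the image of `𝒜 n`, so `I` may be any ideal. -/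
noncomputable def hilbertFunction (𝒜 : ℕ → Submodule k A) (I : Ideal A) (n : ℕ) : ℕ :=
  finrank k ((𝒜 n).map (Quotient.mkₐ k I).toLinearMap)

variable (𝒜 : ℕ → Submodule k A)

theorem hilbertFunction_colon_singleton (I : Ideal A) (G : A) (n : ℕ)
    [FiniteDimensional k (𝒜 n)] :
    hilbertFunction 𝒜 (I.colon {G}) n =
      finrank k ((𝒜 n).map ((Quotient.mkₐ k I).toLinearMap ∘ₗ LinearMap.mulRight k G)) := by
  have hker : LinearMap.ker (Quotient.mkₐ k (I.colon {G})).toLinearMap =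
      LinearMap.ker ((Quotient.mkₐ k I).toLinearMap ∘ₗ LinearMap.mulRight k G) := by
    ext g
    exact Quotient.eq_zero_iff_mem.trans
      (Submodule.mem_colon_singleton.trans Quotient.eq_zero_iff_mem.symm)
  have hcolon := finrank_map_add_finrank_inf_ker (Quotient.mkₐ k (I.colon {G})).toLinearMap (𝒜 n)
  rw [hker] at hcolon
  exact Nat.add_right_cancel (hcolon.trans (finrank_map_add_finrank_inf_ker _ _).symm)

variable {𝒜} [GradedAlgebra 𝒜] [∀ n, FiniteDimensional k (𝒜 n)]

theorem hilbertFunction_add_eq_sup_add_colon {I : Ideal A} (hI : I.IsHomogeneous 𝒜) {G : A} {d : ℕ}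
    (hG : G ∈ 𝒜 d) (n : ℕ) :
    hilbertFunction 𝒜 I (n + d) =
      hilbertFunction 𝒜 (I ⊔ span {G}) (n + d) + hilbertFunction 𝒜 (I.colon {G}) n := by
  rw [hilbertFunction_colon_singleton, ← map_mk_inf_ker_factor hI hG]
  unfold hilbertFunction
  rw [← finrank_map_add_finrank_inf_ker
    (Quotient.factorₐ k (le_sup_left : I ≤ I ⊔ span {G})).toLinearMap, ← Submodule.map_comp]
  rfl

end HilbertFunction

section MvPolynomialIdeals

variable {σ R : Type*} [CommRing R] {i j : σ}

theorem X_mem_span_X_image [Nontrivial R] {s : Set σ} :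
    (X i : MvPolynomial σ R) ∈ span (X '' s) ↔ i ∈ s := by
  classical
  simp [mem_ideal_span_X_image, support_X, Finsupp.single_apply]

variable (R i j) in
/-- The ideal `(x², xy, y³)`, for `x = X i` and `y = X j`, of a structure of multiplicity four on
the linear subspace `{x = y = 0}`; the triple structures in question are cut out of it by the single
form `xq - y²p`. -/
noncomputable def quadrupleIdeal : Ideal (MvPolynomial σ R) :=
  span {X i ^ 2, X i * X j, X j ^ 3}

theorem X_mul_mem_quadrupleIdeal {f : MvPolynomial σ R} (hf : f ∈ span {X i, X j}) :
    X i * f ∈ quadrupleIdeal R i j := by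
  obtain ⟨a, c, rfl⟩ := mem_span_pair.mp hf
  have hxx : X i ^ 2 ∈ quadrupleIdeal R i j := subset_span (by simp)
  have hxy : X i * X j ∈ quadrupleIdeal R i j := subset_span (by simp)
  convert add_mem (mul_mem_left _ a hxx) (mul_mem_left _ c hxy) using 1
  ring

theorem quadrupleIdeal_le_span_sq_X : quadrupleIdeal R i j ≤ span {X i ^ 2, X j} := by
  rw [quadrupleIdeal, span_le]
  rintro _ (rfl | rfl | rfl)
  · exact subset_span (by simp)
  · exact mul_mem_left _ _ (subset_span (by simp))
  · exact pow_mem_of_mem _ (subset_span (by simp)) 3 (by simp)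

theorem quadrupleIdeal_le_span_cube_X : quadrupleIdeal R i j ≤ span {X j ^ 3, X i} := by
  rw [quadrupleIdeal, span_le]
  rintro _ (rfl | rfl | rfl)
  · exact pow_mem_of_mem _ (subset_span (by simp)) 2 (by simp)
  · exact mul_mem_right _ _ (subset_span (by simp))
  · exact subset_span (by simp)

variable [IsDomain R]

theorem isPrime_span_X_image (s : Set σ) :
    (span (X '' s : Set (MvPolynomial σ R))).IsPrime := by
  classical
  let kill : MvPolynomial σ R →ₐ[R] MvPolynomial σ R := aeval fun i ↦ if i ∈ s then 0 else X i
  have sub_kill_mem (f : MvPolynomial σ R) : f - kill f ∈ span (X '' s) := by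
    rw [← Ideal.Quotient.eq]
    have hcomp : Quotient.mkₐ R (span (X '' s)) = (Quotient.mkₐ R (span (X '' s))).comp kill := by
      ext i
      by_cases hi : i ∈ s
      · simpa [kill, hi] using
          Quotient.eq_zero_iff_mem.mpr (subset_span (Set.mem_image_of_mem X hi))
      · simp [kill, hi]
    exact DFunLike.congr_fun hcomp f
  have hker : span (X '' s) = RingHom.ker kill := by
    refine le_antisymm (span_le.mpr ?_) fun f hf ↦ ?_
    · rintro _ ⟨i, hi, rfl⟩
      simp [kill, hi]
    · simpa [(RingHom.mem_ker).mp hf] using sub_kill_mem f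
  rw [hker]
  exact RingHom.ker_isPrime _

theorem colon_span_X_image {s : Set σ} (hi : i ∉ s) :
    (span (X '' s : Set (MvPolynomial σ R))).colon {X i} = span (X '' s) := by
  ext f
  rw [Submodule.mem_colon_singleton, smul_eq_mul, (isPrime_span_X_image s).mul_mem_iff_mem_or_mem,
    X_mem_span_X_image, or_iff_left hi]

theorem isPrime_span_X_pair : (span {X i, X j} : Ideal (MvPolynomial σ R)).IsPrime := by
  simpa [Set.image_pair] using isPrime_span_X_image (R := R) {i, j}

theorem colon_singleton_eq_span_X_pair (hij : i ≠ j) {I : Ideal (MvPolynomial σ R)}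
    {G h : MvPolynomial σ R} {m : ℕ} (hxG : X i * G ∈ I) (hyG : X j * G ∈ I)
    (hI : I ≤ span {X i ^ (m + 1), X j}) (hG : X j ∣ G - X i ^ m * h) (hh : h ∉ span {X i, X j}) :
    I.colon {G} = span {X i, X j} :=
  colon_singleton_eq_span_pair isPrime_span_X_pair X_prime (by simpa [X_dvd_X] using hij.symm)
    hxG hyG hI hG hh

theorem colon_span_X_X_pow (hij : i ≠ j) (m : ℕ) :
    (span {X i, X j ^ (m + 1)} : Ideal (MvPolynomial σ R)).colon {X j ^ m} = span {X i, X j} := by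
  rw [Set.pair_comm (X i) (X j)]
  refine colon_singleton_eq_span_X_pair hij.symm (m := m) (h := 1)
    (subset_span (by simp [pow_succ'])) (mul_mem_right _ _ (subset_span (by simp)))
    (by rw [Set.pair_comm]) (by simp) ?_
  exact (ne_top_iff_one _).mp isPrime_span_X_pair.ne_top

theorem colon_quadrupleIdeal_X (hij : i ≠ j) :
    (quadrupleIdeal R i j).colon {X i} = span {X i, X j} := by
  refine colon_singleton_eq_span_X_pair hij (m := 1) (h := 1) ?_ ?_ quadrupleIdeal_le_span_sq_X
    (by simp) ((ne_top_iff_one _).mp isPrime_span_X_pair.ne_top)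
  · exact X_mul_mem_quadrupleIdeal (subset_span (by simp))
  · rw [mul_comm]
    exact X_mul_mem_quadrupleIdeal (subset_span (by simp))

theorem colon_quadrupleIdeal_X_mul_sub (hij : i ≠ j) {p q : MvPolynomial σ R}
    (hpq : p ∉ span {X i, X j} ∨ q ∉ span {X i, X j}) :
    (quadrupleIdeal R i j).colon {X i * q - X j ^ 2 * p} = span {X i, X j} := by
  have hxx : X i ^ 2 ∈ quadrupleIdeal R i j := subset_span (by simp)
  have hxy : X i * X j ∈ quadrupleIdeal R i j := subset_span (by simp)
  have hyyy : X j ^ 3 ∈ quadrupleIdeal R i j := subset_span (by simp)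
  have hxF : X i * (X i * q - X j ^ 2 * p) ∈ quadrupleIdeal R i j := by
    convert sub_mem (mul_mem_left _ q hxx) (mul_mem_left _ (X j * p) hxy) using 1; ring
  have hyF : X j * (X i * q - X j ^ 2 * p) ∈ quadrupleIdeal R i j := by
    convert sub_mem (mul_mem_left _ q hxy) (mul_mem_left _ p hyyy) using 1; ring
  obtain hp | hq := hpq
  · rw [Set.pair_comm] at hp ⊢
    exact colon_singleton_eq_span_X_pair hij.symm (m := 2) (h := -p) hyF hxF
      quadrupleIdeal_le_span_cube_X ⟨q, by ring⟩ (by rwa [neg_mem_iff])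
  · exact colon_singleton_eq_span_X_pair hij (m := 1) (h := q) hxF hyF
      quadrupleIdeal_le_span_sq_X ⟨-(X j * p), by ring⟩ hq

end MvPolynomialIdeals

section MvPolynomialHomogeneity

variable {σ R : Type*} [CommRing R]

attribute [local instance] MvPolynomial.gradedAlgebra

theorem isHomogeneous_span_X_image (s : Set σ) :
    (span (X '' s)).IsHomogeneous (homogeneousSubmodule σ R) := by
  refine homogeneous_span _ _ ?_
  rintro _ ⟨i, -, rfl⟩
  exact ⟨1, isHomogeneous_X R i⟩

theorem isHomogeneous_span_X_X_pow (i j : σ) (m : ℕ) :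
    (span {X i, X j ^ m}).IsHomogeneous (homogeneousSubmodule σ R) := by
  refine homogeneous_span _ _ ?_
  rintro _ (rfl | rfl)
  · exact ⟨1, isHomogeneous_X R i⟩
  · exact ⟨_, (isHomogeneous_X R j).pow m⟩

theorem isHomogeneous_quadrupleIdeal (i j : σ) :
    (quadrupleIdeal R i j).IsHomogeneous (homogeneousSubmodule σ R) := by
  refine homogeneous_span _ _ ?_
  rintro _ (rfl | rfl | rfl)
  · exact ⟨_, (isHomogeneous_X R i).pow 2⟩
  · exact ⟨_, (isHomogeneous_X R i).mul (isHomogeneous_X R j)⟩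
  · exact ⟨_, (isHomogeneous_X R j).pow 3⟩

theorem mem_span_X_image_univ_of_isHomogeneous_succ {f : MvPolynomial σ R} {n : ℕ}
    (hf : f.IsHomogeneous (n + 1)) : f ∈ span (X '' Set.univ) := by
  refine mem_ideal_span_X_image.mpr fun m hm ↦ ?_
  have hm0 : m ≠ 0 := by
    rintro rfl
    simpa using hf (mem_support_iff.mp hm)
  simpa using Finsupp.ne_iff.mp hm0

end MvPolynomialHomogeneity

section MvPolynomialHilbertFunction

variable {σ k : Type*} [Field k]

attribute [local instance] MvPolynomial.gradedAlgebra

theorem hilbertFunction_zero_of_ne_top {I : Ideal (MvPolynomial σ k)} (hI : I ≠ ⊤) :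
    hilbertFunction (homogeneousSubmodule σ k) I 0 = 1 := by
  have : Nontrivial (MvPolynomial σ k ⧸ I) := Quotient.nontrivial_iff.mpr hI
  rw [hilbertFunction, homogeneousSubmodule_zero, Submodule.one_eq_span, Submodule.map_span,
    Set.image_singleton]
  exact finrank_span_singleton (by simp)

theorem hilbertFunction_span_X_image_univ_succ (n : ℕ) :
    hilbertFunction (homogeneousSubmodule σ k) (span (X '' Set.univ)) (n + 1) = 0 := by
  have hmap : (homogeneousSubmodule σ k (n + 1)).map
      (Quotient.mkₐ k (span (X '' Set.univ))).toLinearMap = ⊥ := by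
    rw [eq_bot_iff, Submodule.map_le_iff_le_comap]
    exact fun f hf ↦ Quotient.eq_zero_iff_mem.mpr (mem_span_X_image_univ_of_isHomogeneous_succ hf)
  rw [hilbertFunction, hmap, finrank_bot]

variable [Finite σ]

theorem finiteDimensional_homogeneousSubmodule (n : ℕ) :
    FiniteDimensional k (homogeneousSubmodule σ k n) :=
  Module.Finite.iff_fg.mpr (homogeneousSubmodule_fg σ k n)

attribute [local instance] finiteDimensional_homogeneousSubmodule

theorem hilbertFunction_homogeneousSubmodule_add {I : Ideal (MvPolynomial σ k)}
    (hI : I.IsHomogeneous (homogeneousSubmodule σ k)) {G : MvPolynomial σ k} {d : ℕ}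
    (hG : G.IsHomogeneous d) (n : ℕ) :
    hilbertFunction (homogeneousSubmodule σ k) I (n + d) =
      hilbertFunction (homogeneousSubmodule σ k) (I ⊔ span {G}) (n + d) +
        hilbertFunction (homogeneousSubmodule σ k) (I.colon {G}) n :=
  hilbertFunction_add_eq_sup_add_colon hI hG n

theorem hilbertFunction_span_X_image_succ {s : Set σ} {i : σ} (hi : i ∉ s) (n : ℕ) :
    hilbertFunction (homogeneousSubmodule σ k) (span (X '' s)) (n + 1) =
      hilbertFunction (homogeneousSubmodule σ k) (span (X '' insert i s)) (n + 1) +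
        hilbertFunction (homogeneousSubmodule σ k) (span (X '' s)) n := by
  rw [hilbertFunction_homogeneousSubmodule_add (isHomogeneous_span_X_image s) (isHomogeneous_X k i),
    colon_span_X_image hi, sup_comm, ← span_insert, Set.image_insert_eq]

theorem hilbertFunction_span_X_image (s : Set σ) (n : ℕ) :
    hilbertFunction (homogeneousSubmodule σ k) (span (X '' s)) n = Nat.multichoose sᶜ.ncard n := by
  induction hr : sᶜ.ncard generalizing s n with
  | zero =>
    obtain rfl : s = Set.univ := by simpa using (Set.ncard_eq_zero (Set.toFinite _)).mp hr
    cases n with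
    | zero =>
      rw [hilbertFunction_zero_of_ne_top (isPrime_span_X_image _).ne_top,
        Nat.multichoose_zero_right]
    | succ n => rw [hilbertFunction_span_X_image_univ_succ, Nat.multichoose_zero_succ]
  | succ r ih =>
    obtain ⟨i, hi⟩ : sᶜ.Nonempty := Set.nonempty_of_ncard_ne_zero (by lia)
    have hr' : (insert i s)ᶜ.ncard = r := by
      rw [← Set.union_singleton, Set.compl_union, ← Set.sdiff_eq,
        Set.ncard_sdiff_singleton_of_mem hi, hr, Nat.add_sub_cancel]
    induction n with
    | zero =>
      rw [hilbertFunction_zero_of_ne_top (isPrime_span_X_image _).ne_top,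
        Nat.multichoose_zero_right]
    | succ n ihn =>
      rw [hilbertFunction_span_X_image_succ hi, ih _ _ hr', ihn, Nat.multichoose_succ_succ]

variable {i j : σ}

theorem hilbertFunction_span_X_X_pow_succ (hij : i ≠ j) (m n : ℕ) :
    hilbertFunction (homogeneousSubmodule σ k) (span {X i, X j ^ (m + 1)}) (n + m) =
      hilbertFunction (homogeneousSubmodule σ k) (span {X i, X j ^ m}) (n + m) +
        hilbertFunction (homogeneousSubmodule σ k) (span {X i, X j}) n := by
  have hpow : (X j ^ m : MvPolynomial σ k).IsHomogeneous m := by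
    simpa using (isHomogeneous_X k j).pow m
  have hsup : span {X i, X j ^ (m + 1)} ⊔ span {X j ^ m} =
      (span {X i, X j ^ m} : Ideal (MvPolynomial σ k)) := by
    have hle : span {X j ^ (m + 1)} ≤ (span {X j ^ m} : Ideal (MvPolynomial σ k)) :=
      span_singleton_le_span_singleton.mpr (pow_dvd_pow _ m.le_succ)
    rw [span_insert, span_insert, sup_assoc, sup_eq_right.mpr hle]
  rw [hilbertFunction_homogeneousSubmodule_add (isHomogeneous_span_X_X_pow i j _) hpow,
    hsup, colon_span_X_X_pow hij]

theorem hilbertFunction_quadrupleIdeal (hij : i ≠ j) (n : ℕ) :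
    hilbertFunction (homogeneousSubmodule σ k) (quadrupleIdeal k i j) (n + 2) =
      hilbertFunction (homogeneousSubmodule σ k) (span {X i, X j}) (n + 2) +
        2 * hilbertFunction (homogeneousSubmodule σ k) (span {X i, X j}) (n + 1) +
        hilbertFunction (homogeneousSubmodule σ k) (span {X i, X j}) n := by
  have hsup : quadrupleIdeal k i j ⊔ span {X i} = span {X i, X j ^ 3} := by
    refine le_antisymm (sup_le ?_ (span_mono (by simp))) (span_le.mpr ?_)
    · rw [Set.pair_comm]
      exact quadrupleIdeal_le_span_cube_X
    · rintro _ (rfl | rfl)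
      · exact mem_sup_right (mem_span_singleton_self _)
      · exact mem_sup_left (subset_span (by simp))
  have hx := hilbertFunction_homogeneousSubmodule_add (isHomogeneous_quadrupleIdeal i j)
    (isHomogeneous_X k i) (n + 1)
  have hy := hilbertFunction_span_X_X_pow_succ (k := k) hij 1 (n + 1)
  have hyy := hilbertFunction_span_X_X_pow_succ (k := k) hij 2 n
  rw [hsup, colon_quadrupleIdeal_X hij] at hx
  rw [pow_one] at hy
  lia

theorem hilbertFunction_tripleLine (hij : i ≠ j) {p q : MvPolynomial σ k} {e : ℕ}
    (hp : p.IsHomogeneous e) (hq : q.IsHomogeneous (e + 1))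
    (hpq : p ∉ span {X i, X j} ∨ q ∉ span {X i, X j}) (n : ℕ) :
    hilbertFunction (homogeneousSubmodule σ k)
        (span {X i ^ 2, X i * X j, X j ^ 3, X i * q - X j ^ 2 * p}) (n + (e + 2)) +
        hilbertFunction (homogeneousSubmodule σ k) (span {X i, X j}) n =
      hilbertFunction (homogeneousSubmodule σ k) (quadrupleIdeal k i j) (n + (e + 2)) := by
  have hF : (X i * q - X j ^ 2 * p).IsHomogeneous (e + 2) := by
    refine IsHomogeneous.sub ?_ ?_
    · simpa [add_comm, add_left_comm] using (isHomogeneous_X k i).mul hq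
    · simpa [add_comm] using ((isHomogeneous_X k j).pow 2).mul hp
  have hsup : span {X i ^ 2, X i * X j, X j ^ 3, X i * q - X j ^ 2 * p} =
      quadrupleIdeal k i j ⊔ span {X i * q - X j ^ 2 * p} := by
    simp only [quadrupleIdeal, span_insert, sup_assoc]
  rw [hilbertFunction_homogeneousSubmodule_add (isHomogeneous_quadrupleIdeal i j) hF,
    colon_quadrupleIdeal_X_mul_sub hij hpq, hsup]

end MvPolynomialHilbertFunction

theorem hilbertFunction_span_X_zero_X_one {k : Type*} [Field k] (n : ℕ) :
    hilbertFunction (homogeneousSubmodule (Fin 4) k) (span {X 0, X 1}) n = n + 1 := by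
  have hcard : ({0, 1} : Set (Fin 4))ᶜ.ncard = 2 := by
    rw [Set.ncard_compl, Set.ncard_pair (by decide), Nat.card_eq_fintype_card, Fintype.card_fin]
  rw [← Set.image_pair, hilbertFunction_span_X_image, hcard, Nat.multichoose_two]

theorem eval_eq_zero_of_mem_span_X_zero_X_one {R : Type*} [CommRing R]
    {f : MvPolynomial (Fin 4) R} (hf : f ∈ span {X 0, X 1}) (c d : R) :
    eval ![0, 0, c, d] f = 0 := by
  obtain ⟨a, e, rfl⟩ := mem_span_pair.mp hf
  simp

theorem NoCommonZerosAlongY.notMem_span_X_zero_X_one {k : Type*} [Field k]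
    {p q : MvPolynomial (Fin 4) k} (hpq : NoCommonZerosAlongY p q) :
    p ∉ span {X 0, X 1} ∨ q ∉ span {X 0, X 1} :=
  (hpq 1 0 (by simp)).imp (mt (eval_eq_zero_of_mem_span_X_zero_X_one · 1 0))
    (mt (eval_eq_zero_of_mem_span_X_zero_X_one · 1 0))

theorem gradedPieceDim_eq_hilbertFunction {k : Type*} [Field k] (I : Ideal (MvPolynomial (Fin 4) k))
    (n : ℕ) : gradedPieceDim k I n = hilbertFunction (homogeneousSubmodule (Fin 4) k) I n :=
  rfl

theorem stmt_4_general {k : Type*} [Field k] (b : ℕ) (hb : 1 ≤ b)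
    (p q : MvPolynomial (Fin 4) k)
    (hp : p.IsHomogeneous (b - 1)) (hq : q.IsHomogeneous b)
    (hpq : p ∉ span {X 0, X 1} ∨ q ∉ span {X 0, X 1}) (n : ℕ) (hn : b < n) :
    gradedPieceDim k (span {X 0 ^ 2, X 0 * X 1, X 1 ^ 3, X 0 * q - X 1 ^ 2 * p}) n = 3 * n + b := by
  obtain ⟨e, rfl⟩ := Nat.exists_eq_add_of_le' hb
  obtain ⟨m, rfl⟩ := Nat.exists_eq_add_of_le' (Nat.succ_le_of_lt hn)
  have htriple := hilbertFunction_tripleLine (i := 0) (j := 1) (by decide) hp hq hpq m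
  have hquadruple := hilbertFunction_quadrupleIdeal (k := k) (i := (0 : Fin 4)) (j := 1)
    (by decide) (m + e)
  simp only [hilbertFunction_span_X_zero_X_one, add_assoc] at htriple hquadruple
  rw [gradedPieceDim_eq_hilbertFunction]
  lia

/-- the triple line `W` with ideal `(x², xy, y³, xq − y²p)` has Hilbert
polynomial `3n + b`, i.e. it is a curve of degree `3` and arithmetic genus `1−b`. -/
theorem stmt_4 {k : Type*} [Field k] [IsAlgClosed k] (b : ℕ) (hb : 1 ≤ b)
    (p q : MvPolynomial (Fin 4) k)
    (hp : p.IsHomogeneous (b - 1)) (hq : q.IsHomogeneous b)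
    (hpq : NoCommonZerosAlongY p q) :
    ∃ N : ℕ, ∀ n : ℕ, N ≤ n →
      (gradedPieceDim k (Ideal.span {X 0 ^ 2, X 0 * X 1, X 1 ^ 3, X 0 * q - X 1 ^ 2 * p}) n : ℤ)
        = 3 * n + b :=
  ⟨b + 1, fun n hn ↦ mod_cast
    stmt_4_general b hb p q hp hq hpq.notMem_span_X_zero_X_one n (Nat.lt_of_succ_le hn)⟩
end
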